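/- Let R(t,s) be twice continuously differentiable in s on [−t/2, t/2], for fixed 0 < t ≤ 1, with |∂_s^j R(t,s)| ≤ C (t/2 − |s|)^{3−j} for j = 0,1,2,3 and ∂_s^j R(t, ±t/2) = 0 for j = 0,1,2. Then for every λ ≥ 1, |∫_{−t/2}^{t/2} e^{2iλs} (cosh t − cosh 2s)^{−1/2} R(t,s) ds| ≤ C' λ^{−3}, with C' independent of t ∈ (0,1] and λ. -/

import Mathlib

open MeasureTheory Set in
lemma ibp_step (a b lam : ℝ) (hab : a ≤ b) (hl : 1 ≤ lam) (g g' : ℝ → ℂ)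
    (hc : ContinuousOn g (Icc a b)) (hd : ∀ s ∈ Ioo a b, HasDerivAt g (g' s) s)
    (ha : g a = 0) (hb : g b = 0) (hi : IntervalIntegrable g' volume a b) :
    ‖∫ s in a..b, Complex.exp (2*Complex.I*(lam:ℂ)*(s:ℂ)) * g s‖
      = (1/(2*lam)) * ‖∫ s in a..b, Complex.exp (2*Complex.I*(lam:ℂ)*(s:ℂ)) * g' s‖ := by
  have hl0 : (lam:ℂ) ≠ 0 := by
    have : lam ≠ 0 := by linarith
    exact_mod_cast this
  set c : ℂ := 2*Complex.I*(lam:ℂ) with hcdef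
  have hc0 : c ≠ 0 := by simp [hcdef, hl0]
  have hder : ∀ s : ℝ, HasDerivAt (fun s : ℝ => Complex.exp (c*(s:ℂ)) / c) (Complex.exp (c*(s:ℂ))) s := by
    intro s
    have h1 : HasDerivAt (fun s : ℝ => c * (s:ℂ)) (c * 1) s :=
      (HasDerivAt.ofReal_comp (hasDerivAt_id s)).const_mul c
    have h2 := (h1.cexp).div_const c
    refine HasDerivAt.congr_deriv h2 ?_
    field_simp
  have hcontE : Continuous (fun s : ℝ => Complex.exp (c*(s:ℂ))) := by fun_prop
  have key := intervalIntegral.integral_mul_deriv_eq_deriv_mul_of_hasDerivAt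
    (a := a) (b := b) (u := g) (u' := g') (v := fun s : ℝ => Complex.exp (c*(s:ℂ)) / c)
    (v' := fun s : ℝ => Complex.exp (c*(s:ℂ)))
    (by rwa [uIcc_of_le hab]) (by exact (hcontE.div_const c).continuousOn)
    (by rw [min_eq_left hab, max_eq_right hab]; exact hd)
    (by intro s _; exact hder s) hi (hcontE.intervalIntegrable _ _)
  have e1 : (∫ s in a..b, Complex.exp (c*(s:ℂ)) * g s) = ∫ s in a..b, g s * Complex.exp (c*(s:ℂ)) := by
    congr 1; ext s; ring
  have e2 : (∫ s in a..b, g' s * (Complex.exp (c*(s:ℂ)) / c))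
      = (∫ s in a..b, Complex.exp (c*(s:ℂ)) * g' s) / c := by
    rw [← intervalIntegral.integral_div]; congr 1; ext s; ring
  rw [e1, key, ha, hb, e2]
  have hn : ‖c‖ = 2 * lam := by
    simp [hcdef, abs_of_nonneg (by linarith : (0:ℝ) ≤ lam)]
  simp only [zero_mul, sub_zero, zero_sub, norm_neg, norm_div, hn]
  ring

/-- lower bound for the weight -/
lemma F_lower (t s : ℝ) (hs1 : -(t/2) ≤ s) (hs2 : s ≤ t/2) :
    t * (t/2 - |s|) ≤ Real.cosh t - Real.cosh (2*s) := by
  have h1 : Real.cosh t - Real.cosh (2*s) = 2 * Real.sinh (t/2+s) * Real.sinh (t/2-s) := by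
    have e1 : Real.cosh t = Real.cosh ((t/2+s) + (t/2-s)) := by congr 1; ring
    have e2 : Real.cosh (2*s) = Real.cosh ((t/2+s) - (t/2-s)) := by congr 1; ring
    rw [e1, e2, Real.cosh_add (t/2+s), Real.cosh_sub (t/2+s)]; ring
  have h2 : t/2+s ≤ Real.sinh (t/2+s) := Real.self_le_sinh_iff.2 (by linarith)
  have h3 : t/2-s ≤ Real.sinh (t/2-s) := Real.self_le_sinh_iff.2 (by linarith)
  have h4 : (t/2+s) * (t/2-s) ≤ Real.sinh (t/2+s) * Real.sinh (t/2-s) :=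
    mul_le_mul h2 h3 (by linarith) (by linarith)
  rw [h1]
  rcases abs_cases s with ⟨h, h'⟩ | ⟨h, h'⟩ <;> rw [h] <;> nlinarith

lemma sinh_bd (t x : ℝ) (ht1 : t ≤ 1) (hx : |x| ≤ t) : |Real.sinh x| ≤ 2 * t := by
  have h0 : 0 ≤ |x| := abs_nonneg x
  rw [Real.abs_sinh, Real.sinh_eq]
  have h1 := Real.add_one_le_exp (-|x|)
  have h2 := Real.abs_exp_sub_one_sub_id_le (x := |x|) (by rw [abs_abs]; linarith)
  have h3 := (abs_le.1 h2).2
  nlinarith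

lemma cosh_bd (x : ℝ) (hx : |x| ≤ 1) : Real.cosh x ≤ 2 := by
  rw [← Real.cosh_abs]
  have h0 : 0 ≤ |x| := abs_nonneg x
  rw [Real.cosh_eq]
  have h1 : Real.exp (-|x|) ≤ 1 := Real.exp_le_one_iff.2 (by linarith)
  have h2 := Real.abs_exp_sub_one_sub_id_le (x := |x|) (by rw [abs_abs]; linarith)
  have h3 := (abs_le.1 h2).2
  nlinarith

noncomputable def wF (t s : ℝ) : ℝ := Real.cosh t - Real.cosh (2*s)
noncomputable def w0 (t s : ℝ) : ℝ := (Real.cosh t - Real.cosh (2*s)) ^ (-(1/2):ℝ)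
noncomputable def w1 (t s : ℝ) : ℝ := w0 t s ^ 3 * Real.sinh (2*s)
noncomputable def w2 (t s : ℝ) : ℝ :=
  3 * w0 t s ^ 5 * Real.sinh (2*s) ^ 2 + 2 * w0 t s ^ 3 * Real.cosh (2*s)
noncomputable def w3 (t s : ℝ) : ℝ :=
  15 * w0 t s ^ 7 * Real.sinh (2*s) ^ 3 + 18 * w0 t s ^ 5 * Real.sinh (2*s) * Real.cosh (2*s)
    + 4 * w0 t s ^ 3 * Real.sinh (2*s)

lemma wF_pos (t s : ℝ) (ht : 0 < t) (hs : s ∈ Set.Ioo (-(t/2)) (t/2)) : 0 < wF t s := by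
  have h := F_lower t s hs.1.le hs.2.le
  have : |s| < t/2 := abs_lt.2 hs
  have : 0 < t * (t/2 - |s|) := mul_pos ht (by linarith)
  unfold wF; linarith

lemma hasDeriv_sinh (s : ℝ) : HasDerivAt (fun s : ℝ => Real.sinh (2*s)) (2 * Real.cosh (2*s)) s := by
  have h1 : HasDerivAt (fun s : ℝ => 2*s) (2*1) s := (hasDerivAt_id s).const_mul 2
  convert h1.sinh using 1; ring

lemma hasDeriv_cosh (s : ℝ) : HasDerivAt (fun s : ℝ => Real.cosh (2*s)) (2 * Real.sinh (2*s)) s := by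
  have h1 : HasDerivAt (fun s : ℝ => 2*s) (2*1) s := (hasDerivAt_id s).const_mul 2
  convert h1.cosh using 1; ring

lemma w0_deriv (t s : ℝ) (ht : 0 < t) (hs : s ∈ Set.Ioo (-(t/2)) (t/2)) :
    HasDerivAt (w0 t) (w1 t s) s := by
  have hp := wF_pos t s ht hs
  have h2 : HasDerivAt (wF t) (-(2 * Real.sinh (2*s))) s := by
    exact (hasDeriv_cosh s).const_sub (Real.cosh t)
  have h3 := h2.rpow_const (p := (-(1/2):ℝ)) (Or.inl hp.ne')
  have e : w0 t s ^ 3 = wF t s ^ (-(1/2) - 1 : ℝ) := by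
    change (wF t s ^ (-(1/2):ℝ)) ^ 3 = _
    rw [← Real.rpow_natCast, ← Real.rpow_mul hp.le]; norm_num
  refine HasDerivAt.congr_deriv (f := w0 t) h3 ?_
  rw [w1, e]; ring

lemma w1_deriv (t s : ℝ) (ht : 0 < t) (hs : s ∈ Set.Ioo (-(t/2)) (t/2)) :
    HasDerivAt (w1 t) (w2 t s) s := by
  have h := w0_deriv t s ht hs
  have := (h.pow 3).mul (hasDeriv_sinh s)
  refine HasDerivAt.congr_deriv (f := w1 t) this ?_
  simp only [w2, w1, Pi.pow_apply]; push_cast; ring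

lemma w2_deriv (t s : ℝ) (ht : 0 < t) (hs : s ∈ Set.Ioo (-(t/2)) (t/2)) :
    HasDerivAt (w2 t) (w3 t s) s := by
  have h := w0_deriv t s ht hs
  have := (((h.pow 5).const_mul 3).mul ((hasDeriv_sinh s).pow 2)).add
    (((h.pow 3).const_mul 2).mul (hasDeriv_cosh s))
  refine HasDerivAt.congr_deriv (f := w2 t) this ?_
  simp only [w3, w1, Pi.pow_apply]; push_cast; ring

lemma w0_nonneg (t s : ℝ) (hs : s ∈ Set.Icc (-(t/2)) (t/2)) (ht : 0 < t) : 0 ≤ w0 t s := by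
  have h := F_lower t s hs.1 hs.2
  have : |s| ≤ t/2 := abs_le.2 hs
  have : 0 ≤ t * (t/2 - |s|) := mul_nonneg ht.le (by linarith)
  exact Real.rpow_nonneg (by linarith) _

lemma w0_sq (t s : ℝ) (hs : s ∈ Set.Icc (-(t/2)) (t/2)) (ht : 0 < t) :
    w0 t s ^ 2 * (t * (t/2 - |s|)) ≤ 1 := by
  have h := F_lower t s hs.1 hs.2
  have : |s| ≤ t/2 := abs_le.2 hs
  have h0 : 0 ≤ t * (t/2 - |s|) := mul_nonneg ht.le (by linarith)
  have e : w0 t s ^ 2 = (wF t s)⁻¹ := by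
    change (wF t s ^ (-(1/2):ℝ)) ^ 2 = _
    rw [← Real.rpow_natCast, ← Real.rpow_mul (by unfold wF; linarith), ← Real.rpow_neg_one]
    norm_num
  rw [e]
  change _ ≤ wF t s at h
  rcases eq_or_lt_of_le (h0.trans h) with h1 | h1
  · rw [← h1]; simp
  · rw [inv_mul_le_iff₀ h1]; linarith

lemma w_bounds (t s : ℝ) (hs : s ∈ Set.Icc (-(t/2)) (t/2)) (ht : 0 < t) (ht1 : t ≤ 1) :
    |w1 t s| * (t/2 - |s|) ≤ 2 * w0 t s ∧ |w2 t s| * (t/2 - |s|)^2 ≤ 14 * w0 t s ∧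
    |w3 t s| * (t/2 - |s|)^3 ≤ 158 * w0 t s := by
  have hw := w0_nonneg t s hs ht
  have hx := w0_sq t s hs ht
  have hsa : |s| ≤ t/2 := abs_le.2 hs
  have h2s : |2*s| ≤ t := by rw [abs_mul]; norm_num; linarith
  have hS := sinh_bd t (2*s) ht1 h2s
  have hK := cosh_bd (2*s) (h2s.trans ht1)
  have hK0 : 0 ≤ Real.cosh (2*s) := (Real.cosh_pos _).le
  have hdt : t/2 - |s| ≤ t/2 := by linarith [abs_nonneg s]
  have hd0 : 0 ≤ t/2 - |s| := by linarith
  unfold w1 w2 w3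
  generalize w0 t s = w at *
  generalize t/2 - |s| = d at *
  generalize Real.sinh (2*s) = S at *
  generalize Real.cosh (2*s) = K at *
  have hS0 := abs_nonneg S
  have hx0 : 0 ≤ w^2*(t*d) := by positivity
  have hSd : w^2 * |S| * d ≤ 2 := by
    have : w^2*d * |S| ≤ w^2*d*(2*t) := by gcongr
    nlinarith
  have hSd0 : 0 ≤ w^2 * |S| * d := by positivity
  have hKd : w^2 * K * d^2 ≤ 1 := by
    have h1 : w^2 * K * d^2 ≤ w^2 * 2 * (d * (t/2)) := by
      rw [pow_two d]; gcongr
    nlinarith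
  have hKd0 : 0 ≤ w^2 * K * d^2 := by positivity
  set X := w^2 * |S| * d with hX
  set Y := w^2 * K * d^2 with hY
  have hX2 : X^2 ≤ 4 := by nlinarith
  have hX3 : X^3 ≤ 8 := by nlinarith
  have hXY : X*Y ≤ 2 := by nlinarith
  have hXd : X*d^2 ≤ 2*(1/4) := by
    have : d^2 ≤ 1/4 := by nlinarith
    exact mul_le_mul hSd this (by positivity) (by norm_num)
  refine ⟨?_, ?_, ?_⟩
  · rw [abs_mul, abs_of_nonneg (by positivity : 0 ≤ w^3)]
    calc w^3 * |S| * d = X * w := by rw [hX]; ring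
      _ ≤ 2 * w := by gcongr
  · have : |3 * w^5 * S^2 + 2 * w^3 * K| = 3 * w^5 * |S|^2 + 2 * w^3 * K := by
      rw [sq_abs]; exact abs_of_nonneg (by positivity)
    rw [this]
    calc _ = (3 * X^2 + 2 * Y) * w := by rw [hX, hY]; ring
      _ ≤ 14 * w := by gcongr; linarith
  · have : |15 * w^7 * S^3 + 18 * w^5 * S * K + 4 * w^3 * S|
        ≤ 15 * w^7 * |S|^3 + 18 * w^5 * |S| * K + 4 * w^3 * |S| := by
      refine (abs_add_three _ _ _).trans (le_of_eq ?_)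
      simp only [abs_mul, abs_pow, abs_of_nonneg hw, abs_of_nonneg hK0]
      norm_num
    calc _ ≤ (15 * w^7 * |S|^3 + 18 * w^5 * |S| * K + 4 * w^3 * |S|) * d^3 := by gcongr
      _ = (15 * X^3 + 18 * (X * Y) + 4 * (X*d^2)) * w := by rw [hX, hY]; ring
      _ ≤ 158 * w := by gcongr; linarith

lemma prod_bd (C d a w M : ℝ) (z : ℂ) (j : ℕ) (k : ℕ) (hC : 0 < C) (hd : 0 ≤ d)
    (ha : |a| * d ^ j ≤ M * w) (hz : ‖z‖ ≤ C * d ^ (j + k)) :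
    ‖(a:ℂ) * z‖ ≤ M * C * (d ^ k * w) := by
  rw [norm_mul, Complex.norm_real, Real.norm_eq_abs]
  calc |a| * ‖z‖ ≤ |a| * (C * d^(j+k)) := by gcongr
    _ = (|a| * d^j) * (C * d^k) := by rw [pow_add]; ring
    _ ≤ (M * w) * (C * d^k) := by gcongr
    _ = _ := by ring

open MeasureTheory Set in
lemma cont_of_bd (t K : ℝ) (ht : 0 < t) (g g' : ℝ → ℂ) (hK : 0 ≤ K)
    (hd : ∀ s ∈ Ioo (-(t/2)) (t/2), HasDerivAt g (g' s) s)
    (hb : ∀ s ∈ Icc (-(t/2)) (t/2), ‖g s‖ ≤ K * ((t/2 - |s|) * w0 t s)) (ht1 : t ≤ 1) :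
    ContinuousOn g (Icc (-(t/2)) (t/2)) ∧ g (-(t/2)) = 0 ∧ g (t/2) = 0 := by
  have hb' : ∀ s ∈ Icc (-(t/2)) (t/2), ‖g s‖ ≤ K * √((t/2 - |s|) / t) := by
    intro s hs
    refine (hb s hs).trans ?_
    gcongr
    apply Real.le_sqrt_of_sq_le
    rw [le_div_iff₀ ht]
    have := w0_sq t s hs ht
    have hsa : |s| ≤ t/2 := abs_le.2 hs
    nlinarith
  have z : ∀ s ∈ Icc (-(t/2)) (t/2), |s| = t/2 → g s = 0 := by
    intro s hs h
    have := hb' s hs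
    rw [h] at this
    simpa using this
  have hend : ∀ s ∈ Icc (-(t/2)) (t/2), |s| = t/2 →
      ContinuousWithinAt g (Icc (-(t/2)) (t/2)) s := by
    intro s hs h
    rw [ContinuousWithinAt, z s hs h]
    apply squeeze_zero_norm' (a := fun s => K * √((t/2 - |s|) / t))
    · filter_upwards [self_mem_nhdsWithin] with x hx using hb' x hx
    · have : Continuous (fun s : ℝ => K * √((t/2 - |s|) / t)) := by fun_prop
      have h1 := (this.tendsto s).mono_left (nhdsWithin_le_nhds (s := Icc (-(t/2)) (t/2)))
      simpa [h] using h1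
  refine ⟨?_, z _ ⟨le_rfl, by linarith⟩ ?_, z _ ⟨by linarith, le_rfl⟩ ?_⟩
  · intro s hs
    by_cases h : |s| = t/2
    · exact hend s hs h
    · have : |s| < t/2 := lt_of_le_of_ne (abs_le.2 hs) h
      exact (hd s (abs_lt.1 this)).continuousAt.continuousWithinAt
  · rw [abs_neg, abs_of_pos (by linarith)]
  · rw [abs_of_pos (by linarith)]

lemma w0_le (t s : ℝ) (ht : 0 < t) (hs : s ∈ Set.Ioo (-(t/2)) (t/2)) :
    w0 t s ≤ t ^ (-(1/2):ℝ) * ((t/2 - s) ^ (-(1/2):ℝ) + (t/2 + s) ^ (-(1/2):ℝ)) := by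
  have h := F_lower t s hs.1.le hs.2.le
  have hsa : |s| < t/2 := abs_lt.2 hs
  have hd : 0 < t/2 - |s| := by linarith
  have h1 : w0 t s ≤ (t * (t/2 - |s|)) ^ (-(1/2):ℝ) :=
    Real.rpow_le_rpow_of_nonpos (by positivity) h (by norm_num)
  rw [Real.mul_rpow ht.le hd.le] at h1
  refine h1.trans ?_
  gcongr
  have p1 : 0 ≤ (t/2 - s) ^ (-(1/2):ℝ) := Real.rpow_nonneg (by linarith [hs.2]) _
  have p2 : 0 ≤ (t/2 + s) ^ (-(1/2):ℝ) := Real.rpow_nonneg (by linarith [hs.1]) _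
  rcases abs_cases s with ⟨h, h'⟩ | ⟨h, h'⟩ <;> rw [h]
  · linarith
  · rw [sub_neg_eq_add]; linarith

open MeasureTheory Set in
lemma bd_int (t : ℝ) (ht : 0 < t) :
    IntervalIntegrable (fun s => t ^ (-(1/2):ℝ) * ((t/2 - s) ^ (-(1/2):ℝ) + (t/2 + s) ^ (-(1/2):ℝ)))
      volume (-(t/2)) (t/2) ∧
    ∫ s in (-(t/2))..(t/2), t ^ (-(1/2):ℝ) * ((t/2 - s) ^ (-(1/2):ℝ) + (t/2 + s) ^ (-(1/2):ℝ)) = 4 := by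
  have h0 : IntervalIntegrable (fun u : ℝ => u ^ (-(1/2):ℝ)) volume 0 t :=
    intervalIntegral.intervalIntegrable_rpow' (by norm_num)
  have i1 : IntervalIntegrable (fun s => (t/2 - s) ^ (-(1/2):ℝ)) volume (-(t/2)) (t/2) := by
    have := (h0.comp_sub_left (t/2)).symm
    convert this using 1 <;> ring
  have i2 : IntervalIntegrable (fun s => (t/2 + s) ^ (-(1/2):ℝ)) volume (-(t/2)) (t/2) := by
    have := (h0.comp_add_left (t/2))
    convert this using 1 <;> ring
  refine ⟨(i1.add i2).const_mul _, ?_⟩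
  rw [intervalIntegral.integral_const_mul, intervalIntegral.integral_add i1 i2,
    intervalIntegral.integral_comp_sub_left (fun u : ℝ => u ^ (-(1/2):ℝ)),
    intervalIntegral.integral_comp_add_left (fun u : ℝ => u ^ (-(1/2):ℝ))]
  have e1 : t/2 - t/2 = 0 := by ring
  have e2 : t/2 - -(t/2) = t := by ring
  have e3 : t/2 + -(t/2) = 0 := by ring
  have e4 : t/2 + t/2 = t := by ring
  rw [e1, e2, e3, e4, integral_rpow (Or.inl (by norm_num))]
  have e5 : t ^ (-(1/2):ℝ) * t ^ (-(1/2) + 1:ℝ) = 1 := by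
    rw [← Real.rpow_add ht]; norm_num
  have e6 : (0:ℝ) ^ (-(1/2) + 1:ℝ) = 0 := Real.zero_rpow (by norm_num)
  rw [e6]
  linear_combination 4 * e5

open MeasureTheory Set in
theorem stmt15 (C : ℝ) (hC : 0 < C) : ∃ C' : ℝ, 0 < C' ∧
    ∀ t ∈ Set.Ioc (0:ℝ) 1, ∀ R : ℝ → ℂ, ContDiff ℝ 3 R →
      (∀ j ≤ 3, ∀ s ∈ Set.Icc (-(t/2)) (t/2),
        ‖iteratedDeriv j R s‖ ≤ C * (t/2 - |s|) ^ (3 - j)) →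
      (∀ j ≤ 2, iteratedDeriv j R (t/2) = 0 ∧ iteratedDeriv j R (-(t/2)) = 0) →
      ∀ lam : ℝ, 1 ≤ lam →
        ‖∫ s in (-(t/2))..(t/2), Complex.exp (2*Complex.I*(lam:ℂ)*(s:ℂ)) *
            (((Real.cosh t - Real.cosh (2*s)) ^ (-(1/2):ℝ) : ℝ) : ℂ) * R s‖
          ≤ C' * lam ^ (-(3:ℝ)) := by
  refine ⟨207 * C, by positivity, ?_⟩
  rintro t ⟨ht, ht1⟩ R hR hbd - lam hlam
  have hab : -(t/2) ≤ t/2 := by linarith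
  have hder : ∀ j < 3, ∀ s, HasDerivAt (iteratedDeriv j R) (iteratedDeriv (j+1) R s) s := by
    intro j hj s
    rw [iteratedDeriv_succ]
    exact ((hR.differentiable_iteratedDeriv j (by exact_mod_cast hj)) s).hasDerivAt
  have hcont : ∀ j ≤ 3, Continuous (iteratedDeriv j R) := fun j hj =>
    hR.continuous_iteratedDeriv j (by exact_mod_cast hj)
  have hR0 : iteratedDeriv 0 R = R := iteratedDeriv_zero
  have b0 := hbd 0 (by norm_num)
  have b1 := hbd 1 (by norm_num)
  have b2 := hbd 2 (by norm_num)
  have b3 := hbd 3 (by norm_num)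
  have d0 := hder 0 (by norm_num)
  have d1 := hder 1 (by norm_num)
  have d2 := hder 2 (by norm_num)
  have c0 := hcont 0 (by norm_num)
  have c1 := hcont 1 (by norm_num)
  have c2 := hcont 2 (by norm_num)
  have c3 := hcont 3 (by norm_num)
  rw [hR0] at b0 d0 c0
  simp only [zero_add, Nat.reduceAdd, Nat.reduceSub] at b0 b1 b2 b3 d0 d1 d2
  generalize iteratedDeriv 1 R = R1 at *
  generalize iteratedDeriv 2 R = R2 at *
  generalize iteratedDeriv 3 R = R3 at *
  clear hder hcont hbd hR0
  set g0 : ℝ → ℂ := fun s => (w0 t s : ℂ) * R s with hg0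
  set g1 : ℝ → ℂ := fun s => (w1 t s : ℂ) * R s + (w0 t s : ℂ) * R1 s with hg1
  set g2 : ℝ → ℂ := fun s => (w2 t s : ℂ) * R s + 2 * ((w1 t s : ℂ) * R1 s)
    + (w0 t s : ℂ) * R2 s with hg2
  set g3 : ℝ → ℂ := fun s => (w3 t s : ℂ) * R s + 3 * ((w2 t s : ℂ) * R1 s)
    + 3 * ((w1 t s : ℂ) * R2 s) + (w0 t s : ℂ) * R3 s with hg3
  have D0 : ∀ s ∈ Ioo (-(t/2)) (t/2), HasDerivAt g0 (g1 s) s := fun s hs =>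
    (w0_deriv t s ht hs).ofReal_comp.mul (d0 s)
  have D1 : ∀ s ∈ Ioo (-(t/2)) (t/2), HasDerivAt g1 (g2 s) s := by
    intro s hs
    have := ((w1_deriv t s ht hs).ofReal_comp.mul (d0 s)).add
      ((w0_deriv t s ht hs).ofReal_comp.mul (d1 s))
    refine HasDerivAt.congr_deriv (f := g1) this ?_
    simp only [hg2]; ring
  have D2 : ∀ s ∈ Ioo (-(t/2)) (t/2), HasDerivAt g2 (g3 s) s := by
    intro s hs
    have := (((w2_deriv t s ht hs).ofReal_comp.mul (d0 s)).add
      (((w1_deriv t s ht hs).ofReal_comp.mul (d1 s)).const_mul 2)).add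
      ((w0_deriv t s ht hs).ofReal_comp.mul (d2 s))
    refine HasDerivAt.congr_deriv (f := g2) this ?_
    simp only [hg3]; ring
  -- pointwise bounds
  have B : ∀ s ∈ Icc (-(t/2)) (t/2),
      ‖g0 s‖ ≤ 207 * C * ((t/2-|s|)^3 * w0 t s) ∧ ‖g1 s‖ ≤ 207 * C * ((t/2-|s|)^2 * w0 t s) ∧
      ‖g2 s‖ ≤ 207 * C * ((t/2-|s|)^1 * w0 t s) ∧ ‖g3 s‖ ≤ 207 * C * ((t/2-|s|)^0 * w0 t s) := by
    intro s hs
    have hw := w0_nonneg t s hs ht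
    have hsa : |s| ≤ t/2 := abs_le.2 hs
    have hd0 : 0 ≤ t/2 - |s| := by linarith
    obtain ⟨e1, e2, e3⟩ := w_bounds t s hs ht ht1
    have e0 : |w0 t s| * (t/2-|s|)^0 ≤ 1 * w0 t s := by rw [abs_of_nonneg hw]; simp
    rw [← pow_one (t/2-|s|)] at e1
    have p00 := prod_bd C _ _ _ _ (R s) 0 3 hC hd0 e0 (b0 s hs)
    have p01 := prod_bd C _ _ _ _ (R1 s) 0 2 hC hd0 e0 (b1 s hs)
    have p02 := prod_bd C _ _ _ _ (R2 s) 0 1 hC hd0 e0 (b2 s hs)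
    have p03 := prod_bd C _ _ _ _ (R3 s) 0 0 hC hd0 e0 (b3 s hs)
    have p10 := prod_bd C (t/2-|s|) _ _ _ (R s) 1 2 hC hd0 e1 (b0 s hs)
    have p11 := prod_bd C (t/2-|s|) _ _ _ (R1 s) 1 1 hC hd0 e1 (b1 s hs)
    have p12 := prod_bd C (t/2-|s|) _ _ _ (R2 s) 1 0 hC hd0 e1 (b2 s hs)
    have p20 := prod_bd C _ _ _ _ (R s) 2 1 hC hd0 e2 (b0 s hs)
    have p21 := prod_bd C _ _ _ _ (R1 s) 2 0 hC hd0 e2 (b1 s hs)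
    have p30 := prod_bd C _ _ _ _ (R s) 3 0 hC hd0 e3 (b0 s hs)
    have q : ∀ k : ℕ, 0 ≤ C * ((t/2-|s|)^k * w0 t s) := fun k => by positivity
    have q0 := q 0
    have q1 := q 1
    have q2 := q 2
    have q3 := q 3
    refine ⟨?_, ?_, ?_, ?_⟩
    · simp only [hg0]; linarith
    · simp only [hg1]
      refine (norm_add_le _ _).trans ?_
      linarith
    · simp only [hg2]
      refine (norm_add₃_le).trans ?_
      rw [norm_mul 2]; norm_num only [Complex.norm_ofNat]
      linarith
    · simp only [hg3]
      refine (norm_add_le _ _).trans ((add_le_add_left (norm_add₃_le) _).trans ?_)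
      rw [norm_mul 3, norm_mul 3]; norm_num only [Complex.norm_ofNat]
      linarith
  have drop : ∀ s ∈ Icc (-(t/2)) (t/2), ∀ k : ℕ,
      207 * C * ((t/2-|s|)^(k+1) * w0 t s) ≤ 207 * C * ((t/2-|s|) * w0 t s) := by
    intro s hs k
    have hw := w0_nonneg t s hs ht
    have hsa : |s| ≤ t/2 := abs_le.2 hs
    gcongr
    exact pow_le_of_le_one (by linarith) (by linarith [abs_nonneg s]) (by omega)
  have K0 : 0 ≤ 207 * C := by positivity
  obtain ⟨C0, l0, r0⟩ := cont_of_bd t _ ht g0 g1 K0 D0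
    (fun s hs => (B s hs).1.trans (drop s hs 2)) ht1
  obtain ⟨C1, l1, r1⟩ := cont_of_bd t _ ht g1 g2 K0 D1
    (fun s hs => (B s hs).2.1.trans (drop s hs 1)) ht1
  obtain ⟨C2, l2, r2⟩ := cont_of_bd t _ ht g2 g3 K0 D2
    (fun s hs => (B s hs).2.2.1.trans (drop s hs 0)) ht1
  obtain ⟨I, hI⟩ := bd_int t ht
  set bf : ℝ → ℝ := fun s => t ^ (-(1/2):ℝ) * ((t/2 - s) ^ (-(1/2):ℝ) + (t/2 + s) ^ (-(1/2):ℝ))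
    with hbf
  have I' : IntervalIntegrable (fun s => 207 * C * bf s) volume (-(t/2)) (t/2) := I.const_mul _
  have B3 : ∀ s ∈ Ioo (-(t/2)) (t/2), ‖g3 s‖ ≤ 207 * C * bf s := by
    intro s hs
    refine (B s (Ioo_subset_Icc_self hs)).2.2.2.trans ?_
    rw [pow_zero, one_mul]
    gcongr
    exact w0_le t s ht hs
  have hae : ∀ᵐ s ∂volume, s ∈ Ioc (-(t/2)) (t/2) → ‖g3 s‖ ≤ 207 * C * bf s := by
    have : ∀ᵐ s : ℝ ∂volume, s ≠ t/2 := by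
      simp [ae_iff, measure_singleton]
    filter_upwards [this] with s h1 h2
    exact B3 s ⟨h2.1, lt_of_le_of_ne h2.2 h1⟩
  have m0 : Measurable (w0 t) := by
    unfold w0
    exact (by fun_prop : Measurable (fun s => Real.cosh t - Real.cosh (2*s))).pow_const _
  have m1 : Measurable (w1 t) := by unfold w1; fun_prop
  have m2 : Measurable (w2 t) := by unfold w2; fun_prop
  have m3 : Measurable (w3 t) := by unfold w3; fun_prop
  have mg3 : Measurable g3 := by
    have := c0.measurable
    have := c1.measurable
    have := c2.measurable
    have := c3.measurable
    simp only [hg3]; fun_prop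
  have I3 : IntervalIntegrable g3 volume (-(t/2)) (t/2) := by
    refine I'.mono_fun' mg3.aestronglyMeasurable ?_
    rw [uIoc_of_le hab]
    exact (ae_restrict_iff' measurableSet_Ioc).2 hae
  have I1 : IntervalIntegrable g1 volume (-(t/2)) (t/2) := C1.intervalIntegrable_of_Icc hab
  have I2 : IntervalIntegrable g2 volume (-(t/2)) (t/2) := C2.intervalIntegrable_of_Icc hab
  have S0 := ibp_step _ _ lam hab hlam g0 g1 C0 D0 l0 r0 I1
  have S1 := ibp_step _ _ lam hab hlam g1 g2 C1 D1 l1 r1 I2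
  have S2 := ibp_step _ _ lam hab hlam g2 g3 C2 D2 l2 r2 I3
  have S3 : ‖∫ s in (-(t/2))..(t/2), Complex.exp (2*Complex.I*(lam:ℂ)*(s:ℂ)) * g3 s‖
      ≤ 207 * C * 4 := by
    rw [← hI, ← intervalIntegral.integral_const_mul]
    refine intervalIntegral.norm_integral_le_of_norm_le hab ?_ I'
    filter_upwards [hae] with s h hs
    rw [norm_mul]
    have : ‖Complex.exp (2*Complex.I*(lam:ℂ)*(s:ℂ))‖ = 1 := by
      rw [Complex.norm_exp]; simp
    rw [this, one_mul]
    exact h hs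
  have eq : (fun s : ℝ => Complex.exp (2*Complex.I*(lam:ℂ)*(s:ℂ)) *
            (((Real.cosh t - Real.cosh (2*s)) ^ (-(1/2):ℝ) : ℝ) : ℂ) * R s)
      = fun s : ℝ => Complex.exp (2*Complex.I*(lam:ℂ)*(s:ℂ)) * g0 s := by
    ext s; simp only [hg0, w0]; ring
  rw [eq, S0, S1, S2]
  have hl : 0 < lam := by linarith
  have e : lam ^ (-(3:ℝ)) = (1/lam)^3 := by
    rw [Real.rpow_neg hl.le]; norm_cast; simp
  rw [e]
  have hp : 0 < (1/lam)^3 := by positivity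
  have e' : 1/(2*lam) = (1/2) * (1/lam) := by field_simp
  rw [e']
  nlinarith
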